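/- For every α ∈ F_q((t)) with v_t(α) > 0, there exists a natural number N > 0 (depending on α) such that for all m, n > 0: (∃ k ∈ ℕ, m = n·p^k) if and only if m ≥ n and there exists a ∈ F_q((t)) with α^{-mN} - α^{-nN} = a^p - a. -/

import Mathlib

/-!
Put `g = α⁻¹`, a Laurent series with a pole. After enlarging `F` to a perfect field, `g = γ ^ p ^ s`
where `γ` is not a `p`-th power, i.e. `θ γ ≠ 0` for the Euler derivation `θ = t d/dt`. Since `x ^ p`
and `x` agree modulo the image of `℘ a = a ^ p - a`, only the prime-to-`p` parts of `m` and `n`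
matter, and one has to show that `γ ^ A - γ ^ B` is not of the form `℘ a` when `A > B` are
multiples of `N` prime to `p`. The pole of such an `a` would have order `1 / p` times that of
`γ ^ A`, whereas `-θ a = θ (γ ^ A) - θ (γ ^ B)` has a pole of the order of that of `γ ^ A` up to a
constant depending only on `γ`. As `θ` does not worsen poles, this bounds `A`, so it fails once `N`
is large.
-/

section ArtinSchreier

variable {R S : Type*} [CommRing R] [CommRing S] {p : ℕ} [ExpChar R p] [ExpChar S p]

variable (R p) in
/-- The Artin–Schreier operator `℘ a = a ^ p - a` of a ring of exponential characteristic `p`. Two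
elements are Artin–Schreier equivalent when their difference lies in its range. -/
def artinSchreier : R →+ R :=
  (frobenius R p).toAddMonoidHom - AddMonoidHom.id R

theorem artinSchreier_apply (a : R) : artinSchreier R p a = a ^ p - a := rfl

theorem mem_range_artinSchreier {x : R} :
    x ∈ (artinSchreier R p).range ↔ ∃ a, x = a ^ p - a :=
  exists_congr fun _ ↦ eq_comm

theorem map_mem_range_artinSchreier (f : R →+* S) {x : R}
    (hx : x ∈ (artinSchreier R p).range) : f x ∈ (artinSchreier S p).range := by
  obtain ⟨a, rfl⟩ := hx
  exact ⟨f a, by simp only [artinSchreier_apply, map_sub, map_pow]⟩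

theorem pow_expChar_pow_sub_self_mem_range_artinSchreier (x : R) (k : ℕ) :
    x ^ p ^ k - x ∈ (artinSchreier R p).range := by
  induction k with
  | zero => simp
  | succ k ih =>
    have hstep : x ^ p ^ (k + 1) - x = artinSchreier R p (x ^ p ^ k) + (x ^ p ^ k - x) := by
      rw [artinSchreier_apply, ← pow_mul, ← pow_succ, sub_add_sub_cancel]
    rw [hstep]
    exact add_mem ⟨_, rfl⟩ ih

theorem pow_expChar_pow_sub_pow_expChar_pow_mem_range_artinSchreier_iff (x y : R) (i j : ℕ) :
    x ^ p ^ i - y ^ p ^ j ∈ (artinSchreier R p).range ↔ x - y ∈ (artinSchreier R p).range := by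
  have hxy : x ^ p ^ i - y ^ p ^ j = x - y + ((x ^ p ^ i - x) - (y ^ p ^ j - y)) := by ring
  rw [hxy]
  exact add_mem_cancel_right (sub_mem (pow_expChar_pow_sub_self_mem_range_artinSchreier x i)
    (pow_expChar_pow_sub_self_mem_range_artinSchreier y j))

theorem derivation_artinSchreier {k A : Type*} [CommRing k] [CommRing A] [Algebra k A] {p : ℕ}
    [Fact p.Prime] [CharP A p] (D : Derivation k A A) (a : A) :
    D (artinSchreier A p a) = -D a := by
  rw [artinSchreier_apply, D.map_sub, D.leibniz_pow, nsmul_eq_mul, CharP.cast_eq_zero, zero_mul,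
    zero_sub]

end ArtinSchreier

section HahnSeries

open HahnSeries

variable {Γ R S : Type*}

section Map

variable [AddCommMonoid Γ] [PartialOrder Γ] [IsOrderedCancelAddMonoid Γ] [Semiring R] [Semiring S]

/-- The homomorphism of Hahn series rings applying a ring homomorphism to each coefficient; it
serves to enlarge the coefficient field. -/
def hahnSeriesMap (f : R →+* S) : HahnSeries Γ R →+* HahnSeries Γ S where
  toFun x := x.map f
  map_zero' := HahnSeries.map_zero f.toMonoidWithZeroHom.toZeroHom
  map_one' := HahnSeries.map_one f.toMonoidWithZeroHom
  map_add' _ _ := HahnSeries.map_add f.toAddMonoidHom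
  map_mul' _ _ := HahnSeries.map_mul f.toNonUnitalRingHom

theorem coeff_hahnSeriesMap (f : R →+* S) (x : HahnSeries Γ R) (n : Γ) :
    (hahnSeriesMap f x).coeff n = f (x.coeff n) := rfl

theorem hahnSeriesMap_injective {f : R →+* S} (hf : Function.Injective f) :
    Function.Injective (hahnSeriesMap (Γ := Γ) f) := fun x y hxy ↦ by
  ext n
  exact hf (congrArg (fun z ↦ z.coeff n) hxy)

end Map

theorem order_hahnSeriesMap [AddCommMonoid Γ] [LinearOrder Γ] [IsOrderedCancelAddMonoid Γ]
    [Semiring R] [Semiring S] {f : R →+* S} (hf : Function.Injective f) (x : HahnSeries Γ R) :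
    (hahnSeriesMap f x).order = x.order := by
  rcases eq_or_ne x 0 with rfl | hx
  · simp only [map_zero, order_zero]
  have hfx : hahnSeriesMap f x ≠ 0 :=
    (map_ne_zero_iff _ (hahnSeriesMap_injective hf)).2 hx
  apply le_antisymm
  · apply order_le_of_coeff_ne_zero
    rwa [coeff_hahnSeriesMap, map_ne_zero_iff f hf, coeff_order_eq_zero.ne]
  · apply order_le_of_coeff_ne_zero
    rwa [← map_ne_zero_iff f hf, ← coeff_hahnSeriesMap, coeff_order_eq_zero.ne]

section Order

theorem order_sub_of_order_lt [LinearOrder Γ] [Zero Γ] [AddGroup R] {x y : HahnSeries Γ R}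
    (hx : x ≠ 0) (h : x.order < y.order) : (x - y).order = x.order := by
  have hcoeff : (x - y).coeff x.order ≠ 0 := by
    rwa [coeff_sub, coeff_eq_zero_of_lt_order h, sub_zero, coeff_order_eq_zero.ne]
  apply le_antisymm (order_le_of_coeff_ne_zero hcoeff)
  have hxy : x - y ≠ 0 := ne_zero_of_coeff_ne_zero hcoeff
  have hmin := min_order_le_order_add (x := x) (y := -y) (by rwa [← sub_eq_add_neg])
  rwa [order_neg, min_eq_left h.le, ← sub_eq_add_neg] at hmin

variable [AddCommGroup Γ] [LinearOrder Γ] [IsOrderedAddMonoid Γ]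

theorem order_inv_of_ne_zero [Field R] {x : HahnSeries Γ R} (hx : x ≠ 0) :
    x⁻¹.order = -x.order := by
  rw [eq_neg_iff_add_eq_zero, ← order_mul (inv_ne_zero hx) hx, inv_mul_cancel₀ hx, order_one]

theorem nsmul_lt_nsmul_of_neg {a : Γ} (ha : a < 0) {m n : ℕ} (hnm : n < m) : m • a < n • a := by
  simpa only [smul_neg, neg_lt_neg_iff] using nsmul_lt_nsmul_left (neg_pos.2 ha) hnm

theorem order_pow_sub_self_of_neg [CommRing R] [IsDomain R] {a : HahnSeries Γ R} {n : ℕ}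
    (hn : 1 < n) (h : (a ^ n - a).order < 0) : (a ^ n - a).order = n • a.order := by
  have ha : a.order < 0 := by
    contrapose! h
    rw [← zero_le_orderTop_iff]
    refine le_trans (le_min ?_ ?_) min_orderTop_le_orderTop_sub
    · rw [zero_le_orderTop_iff, order_pow]
      exact nsmul_nonneg h n
    · exact zero_le_orderTop_iff.2 h
  have ha₀ : a ≠ 0 := by
    rintro rfl
    exact ha.ne order_zero
  have hlt : (a ^ n).order < a.order := by
    rw [order_pow]
    simpa only [one_nsmul] using nsmul_lt_nsmul_of_neg ha hn
  rw [order_sub_of_order_lt (pow_ne_zero n ha₀) hlt, order_pow]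

end Order

section EulerDerivation

variable [AddCommMonoid Γ] [PartialOrder Γ] [CommRing R]

/-- The linear map underlying the Euler derivation along an additive map `χ`: it multiplies the
coefficient of exponent `n` by `χ n`. -/
noncomputable def eulerLinearMap (χ : Γ →+ R) : HahnSeries Γ R →ₗ[R] HahnSeries Γ R where
  toFun x :=
    { coeff n := χ n * x.coeff n
      isPWO_support' := x.isPWO_support.mono fun _ hn ↦ right_ne_zero_of_mul hn }
  map_add' _ _ := by ext; simp [mul_add]
  map_smul' _ _ := by ext; simp [mul_left_comm]

theorem coeff_eulerLinearMap (χ : Γ →+ R) (x : HahnSeries Γ R) (n : Γ) :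
    (eulerLinearMap χ x).coeff n = χ n * x.coeff n := rfl

theorem support_eulerLinearMap_subset (χ : Γ →+ R) (x : HahnSeries Γ R) :
    (eulerLinearMap χ x).support ⊆ x.support :=
  fun _ hn ↦ right_ne_zero_of_mul hn

variable [IsOrderedCancelAddMonoid Γ]

theorem eulerLinearMap_mul (χ : Γ →+ R) (x y : HahnSeries Γ R) :
    eulerLinearMap χ (x * y) = x • eulerLinearMap χ y + y • eulerLinearMap χ x := by
  ext n
  rw [smul_eq_mul, smul_eq_mul, mul_comm y, coeff_add, coeff_eulerLinearMap, coeff_mul,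
    coeff_mul_left' x.isPWO_support (support_eulerLinearMap_subset χ x),
    coeff_mul_right' y.isPWO_support (support_eulerLinearMap_subset χ y),
    Finset.mul_sum, ← Finset.sum_add_distrib]
  refine Finset.sum_congr rfl fun ij hij ↦ ?_
  rw [coeff_eulerLinearMap, coeff_eulerLinearMap, ← (Finset.mem_antidiagonal.1 hij).2.2, map_add]
  ring

/-- The Euler derivation of Hahn series along an additive map `χ`. For Laurent series and `χ n = n`
it is `t d/dt`. -/
noncomputable def eulerDerivation (χ : Γ →+ R) :
    Derivation R (HahnSeries Γ R) (HahnSeries Γ R) :=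
  .mk' (eulerLinearMap χ) (eulerLinearMap_mul χ)

theorem coeff_eulerDerivation (χ : Γ →+ R) (x : HahnSeries Γ R) (n : Γ) :
    (eulerDerivation χ x).coeff n = χ n * x.coeff n := rfl

end EulerDerivation

section Derivation

variable [AddCommGroup Γ] [LinearOrder Γ] [IsOrderedAddMonoid Γ] [CommRing R]

theorem order_le_order_eulerDerivation (χ : Γ →+ R) {x : HahnSeries Γ R}
    (hx : eulerDerivation χ x ≠ 0) : x.order ≤ (eulerDerivation χ x).order := by
  rw [← coeff_order_eq_zero.ne, coeff_eulerDerivation] at hx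
  exact order_le_of_coeff_ne_zero (right_ne_zero_of_mul hx)

variable {k : Type*} [CommRing k] [Algebra k (HahnSeries Γ R)]
  (D : Derivation k (HahnSeries Γ R) (HahnSeries Γ R))

theorem derivation_pow_mul_self (g : HahnSeries Γ R) (n : ℕ) :
    D (g ^ n) * g = C (n : R) * (g ^ n * D g) := by
  rcases eq_or_ne n 0 with rfl | hn
  · simp
  rw [D.leibniz_pow, nsmul_eq_mul, smul_eq_mul, map_natCast, ← pow_sub_one_mul hn g]
  ring

variable [IsDomain R] {g : HahnSeries Γ R} {n : ℕ}

theorem derivation_pow_ne_zero (hg : D g ≠ 0) (hn : (n : R) ≠ 0) : D (g ^ n) ≠ 0 := by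
  have hg₀ : g ≠ 0 := ne_zero_of_map hg
  apply left_ne_zero_of_mul (b := g)
  rw [derivation_pow_mul_self]
  exact mul_ne_zero (C_ne_zero hn) (mul_ne_zero (pow_ne_zero n hg₀) hg)

theorem order_derivation_pow (hg : D g ≠ 0) (hn : (n : R) ≠ 0) :
    (D (g ^ n)).order = n • g.order + ((D g).order - g.order) := by
  have hg₀ : g ≠ 0 := ne_zero_of_map hg
  rw [← add_sub_assoc, eq_sub_iff_add_eq, ← order_mul (derivation_pow_ne_zero D hg hn) hg₀,
    derivation_pow_mul_self, order_mul (C_ne_zero hn) (mul_ne_zero (pow_ne_zero n hg₀) hg),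
    order_C, zero_add, order_mul (pow_ne_zero n hg₀) hg, order_pow]

theorem derivation_pow_sub_pow_ne_zero_and_order (hg : g.order < 0) (hDg : D g ≠ 0) {m : ℕ}
    (hm : (m : R) ≠ 0) (hn : (n : R) ≠ 0) (hnm : n < m) :
    D (g ^ m - g ^ n) ≠ 0 ∧
      (D (g ^ m - g ^ n)).order = m • g.order + ((D g).order - g.order) := by
  have hlt : (D (g ^ m)).order < (D (g ^ n)).order := by
    rw [order_derivation_pow D hDg hm, order_derivation_pow D hDg hn]
    exact add_lt_add_left (nsmul_lt_nsmul_of_neg hg hnm) _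
  rw [D.map_sub, order_sub_of_order_lt (derivation_pow_ne_zero D hDg hm) hlt,
    order_derivation_pow D hDg hm]
  exact ⟨sub_ne_zero.2 fun h ↦ hlt.ne (congrArg order h), rfl⟩

end Derivation

section ArtinSchreier

variable [AddCommGroup Γ] [LinearOrder Γ] [IsOrderedAddMonoid Γ] [CommRing R] {p : ℕ} [CharP R p]

instance charP_hahnSeries : CharP (HahnSeries Γ R) p :=
  charP_of_injective_ringHom C_injective p

theorem pow_sub_pow_notMem_range_artinSchreier [IsDomain R] [Fact p.Prime] (χ : Γ →+ R)
    {g : HahnSeries Γ R} (hg : g.order < 0) (hθ : eulerDerivation χ g ≠ 0) {m n : ℕ}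
    (hm : ¬ p ∣ m) (hn : ¬ p ∣ n) (hnm : n < m)
    (hlarge : p • (m • g.order + ((eulerDerivation χ g).order - g.order)) < m • g.order) :
    g ^ m - g ^ n ∉ (artinSchreier (HahnSeries Γ R) p).range := by
  rintro ⟨a, ha⟩
  have hg₀ : g ≠ 0 := ne_zero_of_map hθ
  have horder_sub : (g ^ m - g ^ n).order = m • g.order := by
    rw [order_sub_of_order_lt (pow_ne_zero m hg₀), order_pow]
    simpa only [order_pow] using nsmul_lt_nsmul_of_neg hg hnm
  have hpole : p • a.order = m • g.order := by
    rw [artinSchreier_apply] at ha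
    rw [← horder_sub, ← ha, order_pow_sub_self_of_neg (Fact.out : p.Prime).one_lt]
    rw [ha, horder_sub]
    exact nsmul_neg hg (Nat.ne_zero_of_lt hnm)
  obtain ⟨hθ_sub, horder_θ_sub⟩ := derivation_pow_sub_pow_ne_zero_and_order (eulerDerivation χ) hg
    hθ ((CharP.cast_eq_zero_iff R p m).not.2 hm) ((CharP.cast_eq_zero_iff R p n).not.2 hn) hnm
  rw [← ha, derivation_artinSchreier, order_neg] at horder_θ_sub
  rw [← ha, derivation_artinSchreier, neg_ne_zero] at hθ_sub
  have hle : a.order ≤ m • g.order + ((eulerDerivation χ g).order - g.order) :=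
    (order_le_order_eulerDerivation χ hθ_sub).trans_eq horder_θ_sub
  exact hlarge.not_ge (hpole.symm.trans_le (nsmul_le_nsmul_right hle p))

end ArtinSchreier

end HahnSeries

section LaurentSeries

open HahnSeries

variable {F : Type*} [CommRing F] {p : ℕ}

section Roots

theorem exists_powerSeries_pow_eq_of_forall_not_dvd [ExpChar F p] [PerfectRing F p]
    {f : PowerSeries F} (hf : ∀ n, ¬ p ∣ n → f.coeff n = 0) : ∃ w, w ^ p = f := by
  have hp₀ : p ≠ 0 := expChar_ne_zero F p
  have hfrob (w : PowerSeries F) :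
      (PowerSeries.expand p hp₀ w).map (frobenius F p) = w ^ p :=
    MvPowerSeries.map_frobenius_expand p hp₀
  refine ⟨.mk fun n ↦ (frobeniusEquiv F p).symm (f.coeff (p * n)), ?_⟩
  ext n
  rw [← hfrob, PowerSeries.coeff_map]
  by_cases hn : p ∣ n
  · obtain ⟨k, rfl⟩ := hn
    rw [PowerSeries.coeff_expand_mul, PowerSeries.coeff_mk, frobenius_apply_frobeniusEquiv_symm]
  · rw [PowerSeries.coeff_expand_of_not_dvd _ _ _ hn, map_zero, hf n hn]

theorem exists_pow_eq_of_forall_dvd [ExpChar F p] [PerfectRing F p] {g : LaurentSeries F}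
    (hg : ∀ n, g.coeff n ≠ 0 → (p : ℤ) ∣ n) : ∃ γ : LaurentSeries F, γ ^ p = g := by
  rcases eq_or_ne g 0 with rfl | hg₀
  · exact ⟨0, zero_pow (expChar_ne_zero F p)⟩
  obtain ⟨e, he⟩ := hg _ (coeff_order_eq_zero.not.2 hg₀)
  have hcoeff (n : ℕ) (hn : ¬ p ∣ n) : g.powerSeriesPart.coeff n = 0 := by
    rw [LaurentSeries.powerSeriesPart_coeff]
    contrapose! hn
    have hdvd := hg _ hn
    rw [he, Int.dvd_add_right (dvd_mul_right _ _)] at hdvd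
    exact_mod_cast hdvd
  obtain ⟨w, hw⟩ := exists_powerSeries_pow_eq_of_forall_not_dvd hcoeff
  refine ⟨single e 1 * ofPowerSeries ℤ F w, ?_⟩
  rw [mul_pow, single_pow, one_pow, nsmul_eq_mul, ← he, ← map_pow, hw,
    LaurentSeries.single_order_mul_powerSeriesPart]

variable [IsDomain F] [Fact p.Prime] [CharP F p]

theorem exists_pow_eq_of_eulerDerivation_eq_zero [PerfectRing F p] {g : LaurentSeries F}
    (hg : eulerDerivation (Int.castAddHom F) g = 0) : ∃ γ : LaurentSeries F, γ ^ p = g := by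
  refine exists_pow_eq_of_forall_dvd fun n hn ↦ ?_
  have hcoeff : (n : F) * g.coeff n = 0 := congrArg (fun f ↦ f.coeff n) hg
  exact (CharP.intCast_eq_zero_iff F p n).1 ((mul_eq_zero.1 hcoeff).resolve_right hn)

variable (p) in
theorem exists_pow_pow_eq_and_eulerDerivation_ne_zero [PerfectRing F p] (g : LaurentSeries F)
    (hg : g.order ≠ 0) :
    ∃ (γ : LaurentSeries F) (s : ℕ),
      γ ^ p ^ s = g ∧ eulerDerivation (Int.castAddHom F) γ ≠ 0 := by
  induction h : g.order.natAbs using Nat.strong_induction_on generalizing g with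
  | h M ih =>
    subst h
    by_cases hθ : eulerDerivation (Int.castAddHom F) g = 0
    · obtain ⟨δ, rfl⟩ := exists_pow_eq_of_eulerDerivation_eq_zero hθ (p := p)
      rw [order_pow, nsmul_eq_mul] at hg ih
      have hδ : δ.order ≠ 0 := right_ne_zero_of_mul hg
      have hlt : δ.order.natAbs < ((p : ℤ) * δ.order).natAbs := by
        rw [Int.natAbs_mul, Int.natAbs_natCast]
        exact lt_mul_of_one_lt_left (Int.natAbs_pos.2 hδ) (Fact.out : p.Prime).one_lt
      obtain ⟨γ, s, rfl, hγ⟩ := ih _ hlt δ hδ rfl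
      exact ⟨γ, s + 1, by rw [← pow_mul, pow_succ], hγ⟩
    · exact ⟨g, 0, by rw [pow_zero, pow_one], hθ⟩

end Roots

section Separation

theorem exists_not_dvd_forall_nsmul_add_lt_nsmul (hp : 1 < p) {c : ℤ} (hc : c < 0) (e : ℤ) :
    ∃ N : ℕ, ¬ p ∣ N ∧ ∀ k ≥ N, p • (k • c + e) < k • c := by
  refine ⟨p * e.toNat + 1, ?_, fun k hk ↦ ?_⟩
  · rw [Nat.dvd_add_right (dvd_mul_right _ _), Nat.dvd_one]
    exact hp.ne'
  have hpe : (p : ℤ) * e < k := by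
    have hle : (p : ℤ) * e ≤ p * e.toNat := by
      gcongr
      exact Int.self_le_toNat e
    exact hle.trans_lt (by exact_mod_cast hk)
  have hpc : (1 : ℤ) ≤ (p - 1) * -c := one_le_mul_of_one_le_of_one_le (by omega) (by omega)
  have hk_le : (k : ℤ) ≤ k * ((p - 1) * -c) := le_mul_of_one_le_right (Int.natCast_nonneg k) hpc
  rw [nsmul_eq_mul, nsmul_eq_mul]
  linarith

variable [IsDomain F] [Fact p.Prime] [CharP F p]

theorem exists_forall_eq_of_pow_sub_pow_mem {γ : LaurentSeries F}
    (hγ : γ.order < 0) (hθ : eulerDerivation (Int.castAddHom F) γ ≠ 0) :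
    ∃ N : ℕ, 0 < N ∧ ∀ m n : ℕ, ¬ p ∣ m → ¬ p ∣ n →
      γ ^ (m * N) - γ ^ (n * N) ∈ (artinSchreier (LaurentSeries F) p).range → m = n := by
  have hp : p.Prime := Fact.out
  obtain ⟨N, hpN, hlarge⟩ := exists_not_dvd_forall_nsmul_add_lt_nsmul hp.one_lt hγ
    ((eulerDerivation (Int.castAddHom F) γ).order - γ.order)
  have hN : 0 < N := Nat.pos_of_ne_zero fun h ↦ hpN (h ▸ dvd_zero p)
  have hnotMem {m n : ℕ} (hm : ¬ p ∣ m) (hn : ¬ p ∣ n) (hnm : n < m) :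
      γ ^ (m * N) - γ ^ (n * N) ∉ (artinSchreier (LaurentSeries F) p).range :=
    pow_sub_pow_notMem_range_artinSchreier _ hγ hθ (hp.not_dvd_mul hm hpN) (hp.not_dvd_mul hn hpN)
      (Nat.mul_lt_mul_of_pos_right hnm hN)
      (hlarge _ (Nat.le_mul_of_pos_left N (Nat.zero_lt_of_lt hnm)))
  refine ⟨N, hN, fun m n hm hn hmem ↦ ?_⟩
  rcases lt_trichotomy m n with hlt | heq | hlt
  · exact absurd (by simpa only [neg_sub] using neg_mem hmem) (hnotMem hn hm hlt)
  · exact heq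
  · exact absurd hmem (hnotMem hm hn hlt)

variable (p) in
theorem exists_forall_eq_mul_pow_of_perfectRing [PerfectRing F p] {g : LaurentSeries F}
    (hg : g.order < 0) :
    ∃ N : ℕ, 0 < N ∧ ∀ m n : ℕ, 0 < n → n ≤ m →
      g ^ (m * N) - g ^ (n * N) ∈ (artinSchreier (LaurentSeries F) p).range →
      ∃ k, m = n * p ^ k := by
  have hp : p.Prime := Fact.out
  obtain ⟨γ, s, rfl, hθ⟩ := exists_pow_pow_eq_and_eulerDerivation_ne_zero p g hg.ne
  have hγ : γ.order < 0 := by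
    rw [order_pow] at hg
    exact lt_of_not_ge fun h ↦ hg.not_ge (nsmul_nonneg h _)
  obtain ⟨N, hN, heq⟩ := exists_forall_eq_of_pow_sub_pow_mem (p := p) hγ hθ
  refine ⟨N, hN, fun m n hn hnm hmem ↦ ?_⟩
  obtain ⟨i, m', hm', rfl⟩ := Nat.exists_eq_pow_mul_and_not_dvd (hn.trans_le hnm).ne' p hp.ne_one
  obtain ⟨j, n', hn', rfl⟩ := Nat.exists_eq_pow_mul_and_not_dvd hn.ne' p hp.ne_one
  have hpow (i l : ℕ) : (γ ^ p ^ s) ^ (p ^ i * l * N) = (γ ^ (l * N)) ^ p ^ (s + i) := by ring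
  rw [hpow, hpow, pow_expChar_pow_sub_pow_expChar_pow_mem_range_artinSchreier_iff] at hmem
  obtain rfl := heq m' n' hm' hn' hmem
  have hji : j ≤ i :=
    (Nat.pow_le_pow_iff_right hp.one_lt).1
      (Nat.le_of_mul_le_mul_right hnm (pos_of_mul_pos_right hn (Nat.zero_le _)))
  exact ⟨i - j, by rw [mul_right_comm, ← _root_.pow_add, Nat.add_sub_cancel' hji]⟩

variable (p) in
theorem exists_forall_eq_mul_pow {F : Type*} [Field F] [CharP F p] {g : LaurentSeries F}
    (hg : g.order < 0) :
    ∃ N : ℕ, 0 < N ∧ ∀ m n : ℕ, 0 < n → n ≤ m →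
      g ^ (m * N) - g ^ (n * N) ∈ (artinSchreier (LaurentSeries F) p).range →
      ∃ k, m = n * p ^ k := by
  let ι : LaurentSeries F →+* LaurentSeries (PerfectClosure F p) :=
    hahnSeriesMap (PerfectClosure.of F p)
  have hι : (ι g).order < 0 := by
    rwa [order_hahnSeriesMap (PerfectClosure.of F p).injective]
  obtain ⟨N, hN, h⟩ := exists_forall_eq_mul_pow_of_perfectRing p hι
  refine ⟨N, hN, fun m n hn hnm hmem ↦ h m n hn hnm ?_⟩
  simpa only [map_sub, map_pow] using map_mem_range_artinSchreier ι hmem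

end Separation

end LaurentSeries

theorem stmt_11_general (p : ℕ) [Fact p.Prime] (F : Type*) [Field F] [CharP F p]
    (α : LaurentSeries F) (hα : 0 < α.order) :
    ∃ N : ℕ, 0 < N ∧ ∀ m n : ℕ, 0 < m → 0 < n →
      ((∃ k : ℕ, m = n * p ^ k) ↔
        (n ≤ m ∧ ∃ a : LaurentSeries F,
          α ^ (-((m * N : ℕ) : ℤ)) - α ^ (-((n * N : ℕ) : ℤ)) = a ^ p - a)) := by
  have hα₀ : α ≠ 0 := by
    rintro rfl
    exact hα.ne' HahnSeries.order_zero
  obtain ⟨N, hN, h⟩ := exists_forall_eq_mul_pow p (g := α⁻¹)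
    (by rwa [order_inv_of_ne_zero hα₀, neg_lt_zero])
  refine ⟨N, hN, fun m n _ hn ↦ ?_⟩
  simp only [zpow_neg, zpow_natCast, ← inv_pow, ← mem_range_artinSchreier]
  constructor
  · rintro ⟨k, rfl⟩
    refine ⟨Nat.le_mul_of_pos_right n (pow_pos (Fact.out : p.Prime).pos k), ?_⟩
    rw [mul_right_comm, pow_mul]
    exact pow_expChar_pow_sub_self_mem_range_artinSchreier _ k
  · rintro ⟨hnm, hmem⟩
    exact h m n hn hnm hmem

/-- For every `α` with `v_t(α) > 0` there is `N > 0` such that for all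
`m, n > 0`, `n |_p m` iff `m ≥ n` and `α^{-mN} - α^{-nN} = a^p - a` has a solution. -/
theorem stmt_11 (p : ℕ) [Fact p.Prime] (r : ℕ) (hr : 0 < r)
    (F : Type*) [Field F] [Fintype F] [CharP F p] (hq : Fintype.card F = p ^ r)
    (α : LaurentSeries F) (hα : 0 < α.order) :
    ∃ N : ℕ, 0 < N ∧ ∀ m n : ℕ, 0 < m → 0 < n →
      ((∃ k : ℕ, m = n * p ^ k) ↔
        (n ≤ m ∧ ∃ a : LaurentSeries F,
          α ^ (-((m * N : ℕ) : ℤ)) - α ^ (-((n * N : ℕ) : ℤ)) = a ^ p - a)) :=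
  stmt_11_general p F α hα
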